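/- Let σ > 0 and N ≥ 2 an integer, assume Π⁺ is continuously differentiable on (m, M) and that the limit Ψ⁺ₓ(M) = lim_{x→M⁻} (d/dx)Ψ⁺(x) exists. Let R : ℝ → [m, M] be a nondecreasing solution of equation (C⁺) with R(x) < M for all x and lim_{x→∞} R(x) = M, and set G = M − R. Then G is regularly varying at ∞ of index ρ⁺ = (Ψ⁺ₓ(M) − 1)/(1 − Ψ⁺ₓ(M)/N), i.e. for every x > 0 one has G(αx)/G(α) → x^{ρ⁺} as α → ∞. -/

import Mathlib

open MeasureTheory Filter Set

/-- Centered Gaussian density with variance `σ²`. -/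
noncomputable def gq (σ z : ℝ) : ℝ :=
  Real.exp (-(z ^ 2) / (2 * σ ^ 2)) / (σ * Real.sqrt (2 * Real.pi))

/-- The averaged kernel `q̄(σ,x,z)`. -/
noncomputable def gqbar (σ x z : ℝ) : ℝ :=
  if x = 0 then gq σ z else (1 / x) * ∫ y in (0:ℝ)..x, gq σ (y - z)

/-- `Φ⁺(y) = E[V·1_{V>y}]`. -/
noncomputable def Phip {Ω : Type*} [MeasurableSpace Ω] (P : Measure Ω) (V : Ω → ℝ) (y : ℝ) : ℝ :=
  ∫ ω in {ω | V ω > y}, V ω ∂P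

/-- `Π⁺(y) = P(V > y)`. -/
noncomputable def Pip {Ω : Type*} [MeasurableSpace Ω] (P : Measure Ω) (V : Ω → ℝ) (y : ℝ) : ℝ :=
  (P {ω | V ω > y}).toReal

/-- `Φ⁻(y) = E[V·1_{V≤y}]`. -/
noncomputable def Phim {Ω : Type*} [MeasurableSpace Ω] (P : Measure Ω) (V : Ω → ℝ) (y : ℝ) : ℝ :=
  ∫ ω in {ω | V ω ≤ y}, V ω ∂P

/-- `Π⁻(y) = P(V ≤ y)`. -/
noncomputable def Pim {Ω : Type*} [MeasurableSpace Ω] (P : Measure Ω) (V : Ω → ℝ) (y : ℝ) : ℝ :=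
  (P {ω | V ω ≤ y}).toReal

/-- `Ψ⁺ = Φ⁺/Π⁺`. -/
noncomputable def Psip {Ω : Type*} [MeasurableSpace Ω] (P : Measure Ω) (V : Ω → ℝ) (y : ℝ) : ℝ :=
  Phip P V y / Pip P V y

/-- `Ψ⁻ = Φ⁻/Π⁻`. -/
noncomputable def Psim {Ω : Type*} [MeasurableSpace Ω] (P : Measure Ω) (V : Ω → ℝ) (y : ℝ) : ℝ :=
  Phim P V y / Pim P V y

/-- `φ⁺_g`. -/
noncomputable def phip {Ω : Type*} [MeasurableSpace Ω] (P : Measure Ω) (V : Ω → ℝ)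
    (σ : ℝ) (g : ℝ → ℝ) (x : ℝ) : ℝ :=
  (∫ z, Phip P V (g z) * gq σ (x - z)) / (∫ z, Pip P V (g z) * gq σ (x - z))

/-- `φ⁻_g`. -/
noncomputable def phim {Ω : Type*} [MeasurableSpace Ω] (P : Measure Ω) (V : Ω → ℝ)
    (σ : ℝ) (g : ℝ → ℝ) (x : ℝ) : ℝ :=
  (∫ z, Phim P V (g z) * gq σ (x - z)) / (∫ z, Pim P V (g z) * gq σ (x - z))

/-- `φ_g`, equal to `φ⁺_g` on `[0,∞)` and `φ⁻_g` on `(−∞,0)`. -/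
noncomputable def phig {Ω : Type*} [MeasurableSpace Ω] (P : Measure Ω) (V : Ω → ℝ)
    (σ : ℝ) (g : ℝ → ℝ) (x : ℝ) : ℝ :=
  if 0 ≤ x then phip P V σ g x else phim P V σ g x

/-- The interior of the support of the law of `V` is `(m, M)` (with `V` bounded). -/
def SuppIoo {Ω : Type*} [MeasurableSpace Ω] (P : Measure Ω) (V : Ω → ℝ) (m M : ℝ) : Prop :=
  m < M ∧ (∀ᵐ ω ∂P, V ω ∈ Set.Icc m M) ∧
    (∀ y < M, 0 < P {ω | V ω > y}) ∧ (∀ y, m < y → 0 < P {ω | V ω ≤ y})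

/-- Equation (E). -/
def SolvesE {Ω : Type*} [MeasurableSpace Ω] (P : Measure Ω) (V : Ω → ℝ)
    (σ : ℝ) (N : ℕ) (F : ℝ → ℝ) : Prop :=
  ∀ x : ℝ, F x =
    ∫ z, ((1 / (N:ℝ)) * gq σ (x - z) + (((N:ℝ) - 1) / (N:ℝ)) * gqbar σ x z) * phig P V σ F z

/-- Equation (C⁺). -/
def SolvesCp {Ω : Type*} [MeasurableSpace Ω] (P : Measure Ω) (V : Ω → ℝ)
    (σ : ℝ) (N : ℕ) (R : ℝ → ℝ) : Prop :=
  ∀ x : ℝ, R x =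
    (∫ z in Set.Ioi (0:ℝ),
      ((1 / (N:ℝ)) * gq σ (x - z) + (((N:ℝ) - 1) / (N:ℝ)) * gqbar σ x z) *
        ∫ y, Psip P V (R y) * gq σ (z - y)) +
    (∫ ω, V ω ∂P) *
      ∫ z in Set.Iio (0:ℝ),
        ((1 / (N:ℝ)) * gq σ (x - z) + (((N:ℝ) - 1) / (N:ℝ)) * gqbar σ x z)

/-! ## Gaussian facts -/

lemma gq_pos {σ : ℝ} (hσ : 0 < σ) (z : ℝ) : 0 < gq σ z := by
  unfold gq; positivity

lemma gq_cont (σ : ℝ) : Continuous (gq σ) := by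
  unfold gq; fun_prop

lemma gq_eq (σ z : ℝ) : gq σ z
    = (σ * Real.sqrt (2 * Real.pi))⁻¹ * Real.exp (-(1 / (2 * σ ^ 2)) * z ^ 2) := by
  unfold gq
  rw [div_eq_inv_mul]
  congr 2
  ring

lemma gq_integrable {σ : ℝ} (hσ : 0 < σ) : Integrable (gq σ) := by
  have h := (integrable_exp_neg_mul_sq (b := 1 / (2 * σ ^ 2)) (by positivity)).const_mul
    (σ * Real.sqrt (2 * Real.pi))⁻¹
  exact h.congr (Eventually.of_forall fun z => (gq_eq σ z).symm)

lemma gq_integral {σ : ℝ} (hσ : 0 < σ) : ∫ z, gq σ z = 1 := by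
  simp_rw [gq_eq, integral_const_mul, integral_gaussian]
  have : Real.pi / (1 / (2 * σ ^ 2)) = σ ^ 2 * (2 * Real.pi) := by field_simp
  rw [this, Real.sqrt_mul (sq_nonneg σ), Real.sqrt_sq hσ.le]
  exact inv_mul_cancel₀ (by positivity)

lemma gq_sq_integrable {σ : ℝ} (hσ : 0 < σ) : Integrable (fun s => (1 + s ^ 2) * gq σ s) := by
  have h := (integrable_rpow_mul_exp_neg_mul_sq (b := 1 / (2 * σ ^ 2)) (by positivity)
    (s := 2) (by norm_num)).const_mul (σ * Real.sqrt (2 * Real.pi))⁻¹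
  refine ((gq_integrable hσ).add h).congr (Eventually.of_forall fun z => ?_)
  simp only [Pi.add_apply]
  rw [show (z ^ (2:ℝ)) = z ^ 2 from by norm_cast, gq_eq]
  ring

/-- Convolution with the Gaussian density. -/
noncomputable def gconv (σ : ℝ) (F : ℝ → ℝ) (x : ℝ) : ℝ := ∫ s, F (x - s) * gq σ s

lemma gconv_integrable {σ : ℝ} (hσ : 0 < σ) {F : ℝ → ℝ} (hF : Antitone F) {K : ℝ}
    (h0 : ∀ x, 0 ≤ F x) (hK : ∀ x, F x ≤ K) (x : ℝ) :
    Integrable (fun s => F (x - s) * gq σ s) := by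
  refine (gq_integrable hσ).bdd_mul (c := K) ?_ ?_
  · exact (hF.measurable.comp (measurable_const.sub measurable_id)).aestronglyMeasurable
  · refine Eventually.of_forall fun s => ?_
    rw [Real.norm_of_nonneg (h0 _)]
    exact hK _

lemma gconv_integrable' {σ : ℝ} (hσ : 0 < σ) {F : ℝ → ℝ} (hF : Antitone F) {K : ℝ}
    (h0 : ∀ x, 0 ≤ F x) (hK : ∀ x, F x ≤ K) (x : ℝ) :
    Integrable (fun z => F z * gq σ (x - z)) := by
  have := (gconv_integrable hσ hF h0 hK x).comp_sub_left x
  simpa using this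

lemma gconv_eq (σ : ℝ) (F : ℝ → ℝ) (x : ℝ) : ∫ z, F z * gq σ (x - z) = gconv σ F x := by
  unfold gconv
  rw [← integral_sub_left_eq_self (fun s => F (x - s) * gq σ s) volume x]
  simp

lemma gconv_antitone {σ : ℝ} (hσ : 0 < σ) {F : ℝ → ℝ} (hF : Antitone F) {K : ℝ}
    (h0 : ∀ x, 0 ≤ F x) (hK : ∀ x, F x ≤ K) : Antitone (gconv σ F) := by
  intro x y hxy
  refine integral_mono (gconv_integrable hσ hF h0 hK y) (gconv_integrable hσ hF h0 hK x) ?_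
  intro s
  exact mul_le_mul_of_nonneg_right (hF (by linarith)) (gq_pos hσ s).le

lemma gconv_nonneg {σ : ℝ} (hσ : 0 < σ) {F : ℝ → ℝ}
    (h0 : ∀ x, 0 ≤ F x) (x : ℝ) : 0 ≤ gconv σ F x :=
  integral_nonneg fun s => mul_nonneg (h0 _) (gq_pos hσ s).le

lemma gconv_le {σ : ℝ} (hσ : 0 < σ) {F : ℝ → ℝ} (hF : Antitone F) {K : ℝ}
    (h0 : ∀ x, 0 ≤ F x) (hK : ∀ x, F x ≤ K) (x : ℝ) : gconv σ F x ≤ K := by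
  calc gconv σ F x ≤ ∫ s, K * gq σ s :=
        integral_mono (gconv_integrable hσ hF h0 hK x) ((gq_integrable hσ).const_mul K)
          fun s => mul_le_mul_of_nonneg_right (hK _) (gq_pos hσ s).le
    _ = K := by rw [integral_const_mul, gq_integral hσ, mul_one]

lemma gconv_continuous {σ : ℝ} (hσ : 0 < σ) {F : ℝ → ℝ} (hF : Antitone F) {K : ℝ}
    (h0 : ∀ x, 0 ≤ F x) (hK : ∀ x, F x ≤ K) : Continuous (gconv σ F) := by
  have e : gconv σ F = fun x => ∫ z, F z * gq σ (x - z) := by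
    funext x; exact (gconv_eq σ F x).symm
  rw [e, continuous_iff_continuousAt]
  intro x₀
  have hKn : 0 ≤ K := (h0 0).trans (hK 0)
  set b : ℝ := 1 / (2 * σ ^ 2) with hb
  have hbp : 0 < b := by positivity
  set C : ℝ := (σ * Real.sqrt (2 * Real.pi))⁻¹ with hC
  have hCp : 0 < C := by positivity
  refine continuousAt_of_dominated
    (bound := fun z => K * (C * (Real.exp b * Real.exp (-(b / 2) * (x₀ - z) ^ 2)))) ?_ ?_ ?_ ?_
  · refine Eventually.of_forall fun x => ?_
    exact (hF.measurable.mul ((gq_cont σ).measurable.comp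
      (measurable_const.sub measurable_id))).aestronglyMeasurable
  · filter_upwards [Metric.ball_mem_nhds x₀ one_pos] with x hx
    refine Eventually.of_forall fun z => ?_
    rw [Real.norm_of_nonneg (mul_nonneg (h0 _) (gq_pos hσ _).le), gq_eq]
    refine mul_le_mul (hK z) ?_ (by positivity) hKn
    refine mul_le_mul_of_nonneg_left ?_ hCp.le
    rw [← Real.exp_add]
    apply Real.exp_le_exp.mpr
    rw [Metric.mem_ball, Real.dist_eq] at hx
    have h1 : (x - x₀) ^ 2 ≤ 1 := by
      have := abs_lt.mp hx
      nlinarith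
    have h2 : (x₀ - z) ^ 2 ≤ 2 * (x - z) ^ 2 + 2 := by
      nlinarith [sq_nonneg ((x - z) + (x - x₀))]
    nlinarith
  · have := (integrable_exp_neg_mul_sq (b := b / 2) (by positivity)).comp_sub_left x₀
    exact ((this.const_mul _).const_mul _).const_mul _
  · refine Eventually.of_forall fun z => ?_
    exact (continuous_const.mul ((gq_cont σ).comp (continuous_id.sub continuous_const))).continuousAt

lemma gconv_upper {σ : ℝ} (hσ : 0 < σ) {F : ℝ → ℝ} (hF : Antitone F) {K : ℝ}
    (h0 : ∀ x, 0 ≤ F x) (hK : ∀ x, F x ≤ K) {B : ℝ → ℝ} (hB : ∀ x, 0 < x → 0 < B x)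
    (hBa : ∀ x y, 0 < x → x ≤ y → B y ≤ B x)
    (hBm : ∀ x y, 0 < x → x ≤ y → x * B x ≤ y * B y)
    {a ε : ℝ} (ha : 0 ≤ a) (hε : 0 < ε) (h : ∀ᶠ x in atTop, F x ≤ a * B x) :
    ∀ᶠ x in atTop, gconv σ F x ≤ (a + ε) * B x := by
  have hKn : 0 ≤ K := (h0 0).trans (hK 0)
  obtain ⟨Y, hY⟩ := eventually_atTop.mp h
  have hB1 : 0 < B 1 := hB 1 one_pos
  set Q : ℝ := a + 4 * K / B 1 with hQ
  have hQ0 : 0 ≤ Q := by positivity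
  set D : ℝ := ∫ s, (1 + s ^ 2) * gq σ s with hD
  have hD0 : 0 ≤ D := integral_nonneg fun s => mul_nonneg (by positivity) (gq_pos hσ s).le
  filter_upwards [eventually_ge_atTop (2 * Y), eventually_ge_atTop 1,
    eventually_ge_atTop (Q * D / ε)] with x hx hx1 hx2
  have hx0 : 0 < x := by linarith
  have hBx := hB x hx0
  have key : ∀ s, F (x - s) ≤ B x * (a + Q / x * (1 + s ^ 2)) := by
    intro s
    have hs : 2 * |s| ≤ 1 + s ^ 2 := by
      rw [← sq_abs s]; nlinarith [sq_nonneg (|s| - 1)]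
    rcases le_or_gt |s| (x / 2) with h1 | h1
    · have hs2 := abs_le.mp h1
      have h2 : F (x - s) ≤ a * B (x - s) := hY _ (by linarith)
      have hp : 0 < x - s := by linarith
      have h3 : B (x - s) ≤ B x * (1 + 2 * |s| / x) := by
        rcases le_total s 0 with h4 | h4
        · have := hBa x (x - s) hx0 (by linarith)
          have h5 : 0 ≤ 2 * |s| / x := by positivity
          nlinarith
        · have := hBm (x - s) x hp (by linarith)
          rw [abs_of_nonneg h4] at h1 ⊢
          have h6 : x ≤ (x - s) * (1 + 2 * s / x) := by
            have : (x - s) * (1 + 2 * s / x) - x = s * (x - 2 * s) / x := by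
              field_simp; ring
            have h7 : 0 ≤ s * (x - 2 * s) / x := by
              apply div_nonneg _ hx0.le
              apply mul_nonneg h4; linarith
            linarith
          have h7 : (x - s) * B (x - s) ≤ (x - s) * (B x * (1 + 2 * s / x)) := by
            nlinarith
          exact le_of_mul_le_mul_left h7 hp
      calc F (x - s) ≤ a * B (x - s) := h2
        _ ≤ a * (B x * (1 + 2 * |s| / x)) := mul_le_mul_of_nonneg_left h3 ha
        _ = B x * (a + a / x * (2 * |s|)) := by ring
        _ ≤ B x * (a + Q / x * (1 + s ^ 2)) := by
          have : a ≤ Q := by rw [hQ]; have : 0 ≤ 4 * K / B 1 := by positivity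
                             linarith
          gcongr
    · have hb : B 1 ≤ x * B x := by simpa using hBm 1 x one_pos hx1
      have hs2 : x ^ 2 ≤ 4 * s ^ 2 := by
        rw [← sq_abs s]; nlinarith
      have h3 : K ≤ B x * ((4 * K / B 1) / x * s ^ 2) := by
        have e : B x * ((4 * K / B 1) / x * s ^ 2) = K * ((4 * s ^ 2) * (x * B x) / (x ^ 2 * B 1)) := by
          field_simp
        rw [e]
        have : 1 ≤ (4 * s ^ 2) * (x * B x) / (x ^ 2 * B 1) := by
          rw [le_div_iff₀ (by positivity), one_mul]
          exact mul_le_mul hs2 hb hB1.le (by positivity)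
        nlinarith
      calc F (x - s) ≤ K := hK _
        _ ≤ _ := h3
        _ ≤ B x * (a + Q / x * (1 + s ^ 2)) := by
          refine mul_le_mul_of_nonneg_left ?_ hBx.le
          have : (4 * K / B 1) / x * s ^ 2 ≤ Q / x * (1 + s ^ 2) := by
            have h9 : 4 * K / B 1 ≤ Q := by rw [hQ]; linarith
            gcongr
            linarith
          linarith
  have hi1 := (gq_integrable hσ).const_mul (B x * a)
  have hi2 := (gq_sq_integrable hσ).const_mul (B x * (Q / x))
  calc gconv σ F x ≤ ∫ s, (B x * a * gq σ s + B x * (Q / x) * ((1 + s ^ 2) * gq σ s)) := by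
        refine integral_mono (gconv_integrable hσ hF h0 hK x) (hi1.add hi2) fun s => ?_
        have := mul_le_mul_of_nonneg_right (key s) (gq_pos hσ s).le
        calc _ ≤ _ := this
          _ = _ := by ring
    _ = B x * a + B x * (Q / x) * D := by
        rw [integral_add hi1 hi2, integral_const_mul, integral_const_mul, gq_integral hσ, mul_one]
    _ ≤ (a + ε) * B x := by
        have : Q / x * D ≤ ε := by
          rw [div_le_iff₀ hε] at hx2
          rw [div_mul_eq_mul_div, div_le_iff₀ hx0]; linarith
        nlinarith

lemma gconv_lower {σ : ℝ} (hσ : 0 < σ) {F : ℝ → ℝ} (hF : Antitone F) {K : ℝ}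
    (h0 : ∀ x, 0 ≤ F x) (hK : ∀ x, F x ≤ K) {B : ℝ → ℝ} (hB : ∀ x, 0 < x → 0 < B x)
    (hBa : ∀ x y, 0 < x → x ≤ y → B y ≤ B x)
    (hBm : ∀ x y, 0 < x → x ≤ y → x * B x ≤ y * B y)
    {a ε : ℝ} (ha : 0 ≤ a) (hε : 0 < ε) (h : ∀ᶠ x in atTop, a * B x ≤ F x) :
    ∀ᶠ x in atTop, (a - ε) * B x ≤ gconv σ F x := by
  obtain ⟨Y, hY⟩ := eventually_atTop.mp h
  set D : ℝ := ∫ s, (1 + s ^ 2) * gq σ s with hD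
  have hD0 : 0 ≤ D := integral_nonneg fun s => mul_nonneg (by positivity) (gq_pos hσ s).le
  filter_upwards [eventually_ge_atTop (2 * Y), eventually_ge_atTop 1,
    eventually_ge_atTop (a * D / ε)] with x hx hx1 hx2
  have hx0 : 0 < x := by linarith
  have hBx := hB x hx0
  have key : ∀ s, B x * (a - a / x * (1 + s ^ 2)) ≤ F (x - s) := by
    intro s
    have hs : 2 * |s| ≤ 1 + s ^ 2 := by
      rw [← sq_abs s]; nlinarith [sq_nonneg (|s| - 1)]
    have h9 : B x * (a - a / x * (1 + s ^ 2)) ≤ a * (B x * (1 - 2 * |s| / x)) := by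
      have e : a * (B x * (1 - 2 * |s| / x)) = B x * (a - a / x * (2 * |s|)) := by ring
      rw [e]
      gcongr
    refine h9.trans ?_
    rcases le_or_gt |s| (x / 2) with h1 | h1
    · have hs2 := abs_le.mp h1
      have h2 : a * B (x - s) ≤ F (x - s) := hY _ (by linarith)
      have hp : 0 < x - s := by linarith
      have h3 : B x * (1 - 2 * |s| / x) ≤ B (x - s) := by
        rcases le_total 0 s with h4 | h4
        · have := hBa (x - s) x hp (by linarith)
          have h5 : 0 ≤ 2 * |s| / x := by positivity
          nlinarith
        · have := hBm x (x - s) hx0 (by linarith)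
          rw [abs_of_nonpos h4] at h1 ⊢
          have h6 : (x - s) * (1 - 2 * (-s) / x) ≤ x := by
            have : x - (x - s) * (1 - 2 * (-s) / x) = (-s) * (x - 2 * s) / x := by
              field_simp; ring
            have h7 : 0 ≤ (-s) * (x - 2 * s) / x := by
              apply div_nonneg _ hx0.le
              apply mul_nonneg <;> linarith
            linarith
          have h7 : (x - s) * (B x * (1 - 2 * (-s) / x)) ≤ (x - s) * B (x - s) := by
            nlinarith
          exact le_of_mul_le_mul_left h7 hp
      exact (mul_le_mul_of_nonneg_left h3 ha).trans h2
    · refine le_trans ?_ (h0 _)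
      have : 1 ≤ 2 * |s| / x := by rw [le_div_iff₀ hx0]; linarith
      have h4 : 0 ≤ a * B x := by positivity
      nlinarith
  have hi1 := (gq_integrable hσ).const_mul (B x * a)
  have hi2 := (gq_sq_integrable hσ).const_mul (B x * (a / x))
  calc (a - ε) * B x ≤ B x * a - B x * (a / x) * D := by
        have : a / x * D ≤ ε := by
          rw [div_le_iff₀ hε] at hx2
          rw [div_mul_eq_mul_div, div_le_iff₀ hx0]; linarith
        nlinarith
    _ = ∫ s, (B x * a * gq σ s - B x * (a / x) * ((1 + s ^ 2) * gq σ s)) := by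
        rw [integral_sub hi1 hi2, integral_const_mul, integral_const_mul, gq_integral hσ, mul_one]
    _ ≤ gconv σ F x := by
        refine integral_mono (hi1.sub hi2) (gconv_integrable hσ hF h0 hK x) fun s => ?_
        have := mul_le_mul_of_nonneg_right (key s) (gq_pos hσ s).le
        calc _ = _ := by ring
          _ ≤ _ := this

lemma gconv_lower_any {σ : ℝ} (hσ : 0 < σ) {F : ℝ → ℝ} (hF : Antitone F) {K : ℝ}
    (h0 : ∀ x, 0 ≤ F x) (hK : ∀ x, F x ≤ K) {B : ℝ → ℝ} (hB : ∀ x, 0 < x → 0 < B x)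
    (hBa : ∀ x y, 0 < x → x ≤ y → B y ≤ B x)
    (hBm : ∀ x y, 0 < x → x ≤ y → x * B x ≤ y * B y)
    {a ε : ℝ} (hε : 0 < ε) (h : ∀ᶠ x in atTop, a * B x ≤ F x) :
    ∀ᶠ x in atTop, (a - ε) * B x ≤ gconv σ F x := by
  rcases le_or_gt 0 a with ha | ha
  · exact gconv_lower hσ hF h0 hK hB hBa hBm ha hε h
  · filter_upwards [eventually_gt_atTop 0] with x hx
    have := hB x hx
    have h2 := gconv_nonneg hσ h0 x
    nlinarith

/-- A self-improving pair of eventual bounds forces convergence to the fixed point. -/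
lemma tendsto_of_self_improving {f : ℝ → ℝ} {L N c : ℝ} (hN : 1 < N)
    (hL0 : 0 ≤ L) (hL1 : L ≤ 1) (hc : c * (1 - L / N) = L * ((N - 1) / N))
    (hf0 : ∀ᶠ x in atTop, 0 ≤ f x) (hf1 : ∀ᶠ x in atTop, f x ≤ 1)
    (hup : ∀ a, 0 ≤ a → (∀ᶠ x in atTop, f x ≤ a) → ∀ ε, 0 < ε →
      ∀ᶠ x in atTop, f x ≤ L * (a / N + (N - 1) / N) + ε)
    (hlo : ∀ a, -1 ≤ a → (∀ᶠ x in atTop, a ≤ f x) → ∀ ε, 0 < ε →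
      ∀ᶠ x in atTop, L * (a / N + (N - 1) / N) - ε ≤ f x) :
    Tendsto f atTop (nhds c) := by
  have hbu : IsBoundedUnder (· ≤ ·) atTop f := ⟨1, by simpa using hf1⟩
  have hbl : IsBoundedUnder (· ≥ ·) atTop f := ⟨0, by simpa using hf0⟩
  have hLN : L / N < 1 := by rw [div_lt_one (by linarith)]; linarith
  refine tendsto_of_le_liminf_of_limsup_le ?_ ?_ hbu hbl
  · have hp0 : 0 ≤ liminf f atTop := le_liminf_of_le (hbu.isCoboundedUnder_ge) hf0
    have h1 : ∀ ε, 0 < ε → ε ≤ 1 → L * ((liminf f atTop - ε) / N + (N - 1) / N) - ε ≤ liminf f atTop := by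
      intro ε hε hε1
      refine le_liminf_of_le (hbu.isCoboundedUnder_ge) ?_
      refine hlo _ (by linarith) ?_ ε hε
      exact (eventually_lt_of_lt_liminf (by linarith) hbl).mono fun x hx => hx.le
    set q := liminf f atTop
    have h2 : L * (q / N + (N - 1) / N) ≤ q := by
      refine le_of_forall_pos_le_add fun ε hε => ?_
      set η := min (ε / 2) 1 with hη
      have hη0 : 0 < η := by positivity
      have hη1 : η ≤ ε / 2 := min_le_left _ _
      have := h1 η hη0 (min_le_right _ _)
      have e : L * ((q - η) / N + (N - 1) / N)
        = L * (q / N + (N - 1) / N) - (L / N) * η := by ring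
      rw [e] at this
      nlinarith
    have h3 : c * (1 - L / N) ≤ q * (1 - L / N) := by
      rw [hc]
      have e : L * (q / N + (N - 1) / N) = q * (L / N) + L * ((N - 1) / N) := by ring
      linarith
    exact le_of_mul_le_mul_right h3 (by linarith)
  · have hp0 : 0 ≤ limsup f atTop :=
      le_limsup_of_frequently_le hf0.frequently hbu
    have h1 : ∀ ε, 0 < ε → limsup f atTop ≤ L * ((limsup f atTop + ε) / N + (N - 1) / N) + ε := by
      intro ε hε
      refine limsup_le_of_le (hbl.isCoboundedUnder_le) ?_
      refine hup _ (by linarith) ?_ ε hε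
      exact (eventually_lt_of_limsup_lt (by linarith) hbu).mono fun x hx => hx.le
    set q := limsup f atTop
    have h2 : q ≤ L * (q / N + (N - 1) / N) := by
      refine le_of_forall_pos_le_add fun ε hε => ?_
      have := h1 (ε / 2) (by linarith)
      have e : L * ((q + ε / 2) / N + (N - 1) / N)
        = L * (q / N + (N - 1) / N) + (L / N) * (ε / 2) := by ring
      rw [e] at this
      nlinarith
    have h3 : q * (1 - L / N) ≤ c * (1 - L / N) := by
      rw [hc]
      have e : L * (q / N + (N - 1) / N) = q * (L / N) + L * ((N - 1) / N) := by ring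
      linarith
    exact le_of_mul_le_mul_right h3 (by linarith)

/-- If `t A'(t) / A(t) → c` then `A` is regularly varying of index `c`. -/
lemma regvar_of_deriv {A W : ℝ → ℝ} {c : ℝ} (hA : ∀ x, 0 < x → 0 < A x)
    (hd : ∀ x, 0 < x → HasDerivAt A (W x) x)
    (hlim : Tendsto (fun x => W x / (A x / x)) atTop (nhds c)) {x : ℝ} (hx : 0 < x) :
    Tendsto (fun α => A (α * x) / A α) atTop (nhds (x ^ c)) := by
  have hder : ∀ k t, 0 < t → HasDerivAt (fun t => Real.log (A t) - k * Real.log t)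
      ((W t / (A t / t) - k) / t) t := by
    intro k t ht
    have h1 := (hd t ht).log (hA t ht).ne'
    have h2 := (Real.hasDerivAt_log ht.ne').const_mul k
    refine (h1.fun_sub h2).congr_deriv ?_
    have := (hA t ht).ne'
    field_simp
  have hlog : Tendsto (fun α => Real.log (A (α * x)) - Real.log (A α)) atTop
      (nhds (c * Real.log x)) := by
    rw [Metric.tendsto_atTop]
    intro ε hε
    set δ := ε / (2 * (|Real.log x| + 1)) with hδ
    have hl : 0 < |Real.log x| + 1 := by positivity
    have hδp : 0 < δ := by positivity
    obtain ⟨T, hT⟩ := (Metric.tendsto_atTop.mp hlim) δ hδp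
    set S := max T 1
    have hS0 : 0 < S := lt_of_lt_of_le one_pos (le_max_right _ _)
    have hanti : AntitoneOn (fun t => Real.log (A t) - (c + δ) * Real.log t) (Ici S) := by
      refine antitoneOn_of_deriv_nonpos (convex_Ici S) ?_ ?_ ?_
      · intro t ht
        exact (hder _ t (lt_of_lt_of_le hS0 ht)).continuousAt.continuousWithinAt
      · intro t ht
        rw [interior_Ici] at ht
        exact (hder _ t (hS0.trans ht)).differentiableAt.differentiableWithinAt
      · intro t ht
        rw [interior_Ici] at ht
        have ht0 := hS0.trans ht
        rw [(hder _ t ht0).deriv]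
        have := hT t ((le_max_left T 1).trans (le_of_lt ht))
        rw [Real.dist_eq] at this
        have := abs_lt.mp this
        exact div_nonpos_of_nonpos_of_nonneg (by linarith) ht0.le
    have hmono : MonotoneOn (fun t => Real.log (A t) - (c - δ) * Real.log t) (Ici S) := by
      refine monotoneOn_of_deriv_nonneg (convex_Ici S) ?_ ?_ ?_
      · intro t ht
        exact (hder _ t (lt_of_lt_of_le hS0 ht)).continuousAt.continuousWithinAt
      · intro t ht
        rw [interior_Ici] at ht
        exact (hder _ t (hS0.trans ht)).differentiableAt.differentiableWithinAt
      · intro t ht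
        rw [interior_Ici] at ht
        have ht0 := hS0.trans ht
        rw [(hder _ t ht0).deriv]
        have := hT t ((le_max_left T 1).trans (le_of_lt ht))
        rw [Real.dist_eq] at this
        have := abs_lt.mp this
        exact div_nonneg (by linarith) ht0.le
    refine ⟨max S (S / x), fun α hα => ?_⟩
    have hα1 : S ≤ α := (le_max_left _ _).trans hα
    have hα0 : 0 < α := lt_of_lt_of_le hS0 hα1
    have hα2 : S ≤ α * x := by
      have := (le_max_right S (S / x)).trans hα
      rwa [div_le_iff₀ hx] at this
    have hlm : Real.log (α * x) = Real.log α + Real.log x := Real.log_mul hα0.ne' hx.ne'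
    have hfin : δ * |Real.log x| < ε := by
      have : δ * (|Real.log x| + 1) = ε / 2 := by rw [hδ]; field_simp
      nlinarith
    rw [Real.dist_eq]
    refine lt_of_le_of_lt ?_ hfin
    rcases le_total 1 x with h1 | h1
    · have hle : α ≤ α * x := by nlinarith
      have e1 := hanti (mem_Ici.mpr hα1) (mem_Ici.mpr hα2) hle
      have e2 := hmono (mem_Ici.mpr hα1) (mem_Ici.mpr hα2) hle
      simp only [hlm] at e1 e2
      rw [abs_of_nonneg (Real.log_nonneg h1), abs_le]
      constructor <;> linarith
    · have hle : α * x ≤ α := by nlinarith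
      have e1 := hanti (mem_Ici.mpr hα2) (mem_Ici.mpr hα1) hle
      have e2 := hmono (mem_Ici.mpr hα2) (mem_Ici.mpr hα1) hle
      simp only [hlm] at e1 e2
      rw [abs_of_nonpos (Real.log_nonpos hx.le h1), abs_le]
      constructor <;> linarith
  have hexp := (Real.continuous_exp.tendsto _).comp hlog
  rw [Real.rpow_def_of_pos hx, mul_comm (Real.log x)]
  refine hexp.congr' ?_
  filter_upwards [eventually_gt_atTop 0] with α hα
  have h1 := hA α hα
  have h2 := hA (α * x) (by positivity)
  simp only [Function.comp]
  rw [Real.exp_sub, Real.exp_log h1, Real.exp_log h2]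

theorem core {σ : ℝ} (hσ : 0 < σ) {N L K : ℝ} (hN : 2 ≤ N) (hL0 : 0 ≤ L) (hL1 : L ≤ 1)
    {H G U : ℝ → ℝ} (hH : Antitone H) (hH0 : ∀ x, 0 ≤ H x) (hHK : ∀ x, H x ≤ K)
    (hU : U = fun z => if 0 < z then gconv σ H z else K)
    (hGpos : ∀ x, 0 < G x)
    (hG : ∀ x, 0 < x → G x = (1 / N) * gconv σ U x
      + ((N - 1) / N) * ((1 / x) * ∫ y in (0:ℝ)..x, gconv σ U y))
    (hHG : ∀ ε, 0 < ε → ∀ᶠ x in atTop, (L - ε) * G x ≤ H x ∧ H x ≤ (L + ε) * G x)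
    {x : ℝ} (hx : 0 < x) :
    Tendsto (fun α => G (α * x) / G α) atTop (nhds (x ^ ((L - 1) / (1 - L / N)))) := by
  have hK : 0 ≤ K := (hH0 0).trans (hHK 0)
  have hUa : Antitone U := by
    intro a b hab
    rw [hU]
    simp only
    split_ifs with h1 h2 h2
    · exact gconv_antitone hσ hH hH0 hHK hab
    · exact gconv_le hσ hH hH0 hHK b
    · linarith
    · exact le_refl _
  have hU0 : ∀ z, 0 ≤ U z := by
    intro z; rw [hU]; simp only
    split_ifs
    · exact gconv_nonneg hσ hH0 z
    · exact hK
  have hUK : ∀ z, U z ≤ K := by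
    intro z; rw [hU]; simp only
    split_ifs
    · exact gconv_le hσ hH hH0 hHK z
    · exact le_refl _
  set W := gconv σ U with hW
  have hWa : Antitone W := gconv_antitone hσ hUa hU0 hUK
  have hW0 : ∀ x, 0 ≤ W x := gconv_nonneg hσ hU0
  have hWc : Continuous W := gconv_continuous hσ hUa hU0 hUK
  set A : ℝ → ℝ := fun x => ∫ y in (0:ℝ)..x, W y with hA
  set B : ℝ → ℝ := fun x => A x / x with hB
  have hAd : ∀ x, HasDerivAt A (W x) x := fun x => hWc.integral_hasStrictDerivAt 0 x |>.hasDerivAt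
  have hAsub : ∀ x y, A y - A x = ∫ t in x..y, W t := by
    intro x y
    exact intervalIntegral.integral_interval_sub_left (hWc.intervalIntegrable _ _)
      (hWc.intervalIntegrable _ _)
  have hAm : ∀ x y, x ≤ y → A x ≤ A y := by
    intro x y hxy
    have := intervalIntegral.integral_nonneg (μ := volume) hxy (fun t _ => hW0 t)
    have := hAsub x y
    linarith
  have hA0 : A 0 = 0 := by simp [hA]
  have hWA : ∀ x, 0 ≤ x → x * W x ≤ A x := by
    intro x hx
    have : ∫ t in (0:ℝ)..x, W x ≤ ∫ t in (0:ℝ)..x, W t := by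
      refine intervalIntegral.integral_mono_on hx (by simp) (hWc.intervalIntegrable _ _) ?_
      intro t ht
      exact hWa ht.2
    simpa using this
  have hAinc : ∀ x y, x ≤ y → A y - A x ≤ (y - x) * W x := by
    intro x y hxy
    rw [hAsub]
    have : ∫ t in x..y, W t ≤ ∫ t in x..y, W x := by
      refine intervalIntegral.integral_mono_on hxy (hWc.intervalIntegrable _ _) (by simp) ?_
      intro t ht
      exact hWa ht.1
    simpa using this
  have hxB : ∀ x, 0 < x → x * B x = A x := by
    intro x hx; simp only [hB]; field_simp
  have hWB : ∀ x, 0 < x → W x ≤ B x := by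
    intro x hx
    simp only [hB]
    rw [le_div_iff₀ hx]
    linarith [hWA x hx.le]
  have hGB : ∀ x, 0 < x → G x = W x / N + (N - 1) / N * B x := by
    intro x hx
    rw [hG x hx]; simp only [hB, hA]; ring
  have hN0 : 0 < N := by linarith
  have hBp : ∀ x, 0 < x → 0 < B x := by
    intro x hx
    have h1 := hGB x hx
    have h2 := hWB x hx
    have h3 := hGpos x
    have h4 : W x / N ≤ B x / N := by gcongr
    have h5 : B x / N + (N - 1) / N * B x = B x := by field_simp; ring
    linarith
  have hAp : ∀ x, 0 < x → 0 < A x := by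
    intro x hx
    rw [← hxB x hx]
    exact mul_pos hx (hBp x hx)
  have hBm : ∀ x y, 0 < x → x ≤ y → x * B x ≤ y * B y := by
    intro x y hx hxy
    rw [hxB x hx, hxB y (by linarith)]
    exact hAm x y hxy
  have hBa : ∀ x y, 0 < x → x ≤ y → B y ≤ B x := by
    intro x y hx hxy
    have h1 := hAinc x y hxy
    have h2 := hWA x hx.le
    have hy : 0 < y := by linarith
    simp only [hB]
    rw [div_le_div_iff₀ hy hx]
    have : (y - x) * (x * W x) ≤ (y - x) * A x := mul_le_mul_of_nonneg_left h2 (by linarith)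
    nlinarith
  set f : ℝ → ℝ := fun x => W x / B x with hf
  have hGf : ∀ x, 0 < x → G x = (f x / N + (N - 1) / N) * B x := by
    intro x hx
    have := (hBp x hx).ne'
    rw [hGB x hx]; simp only [hf]; field_simp
  have hLN : L / N < 1 := by rw [div_lt_one hN0]; linarith
  have hLN' : (1 - L / N) ≠ 0 := by linarith
  set c := L * ((N - 1) / N) / (1 - L / N) with hc
  have hUev : ∀ᶠ z in atTop, U z = gconv σ H z := by
    filter_upwards [eventually_gt_atTop 0] with z hz
    rw [hU]; simp [hz]
  have hNN : 0 ≤ (N - 1) / N := div_nonneg (by linarith) hN0.le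
  have hNN1 : (N - 1) / N ≤ 1 := by rw [div_le_one hN0]; linarith
  have hflim : Tendsto f atTop (nhds c) := by
    refine tendsto_of_self_improving (L := L) (N := N) (by linarith) hL0 hL1 ?_ ?_ ?_ ?_ ?_
    · rw [hc]; exact div_mul_cancel₀ _ hLN'
    · filter_upwards [eventually_gt_atTop 0] with x hx
      exact div_nonneg (hW0 x) (hBp x hx).le
    · filter_upwards [eventually_gt_atTop 0] with x hx
      exact (div_le_one (hBp x hx)).mpr (hWB x hx)
    · intro a ha hfa ε hε
      set δ := ε / (a + 3) with hδ
      have hδp : 0 < δ := by positivity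
      have haN : a / N ≤ a := div_le_self ha (by linarith)
      have haN0 : 0 ≤ a / N := by positivity
      set b := a / N + (N - 1) / N with hb
      have hb0 : 0 ≤ b := by positivity
      have h1 : ∀ᶠ x in atTop, H x ≤ ((L + δ) * b) * B x := by
        filter_upwards [hfa, hHG δ hδp, eventually_gt_atTop 0] with x h1 h2 hx
        refine h2.2.trans ?_
        rw [hGf x hx, mul_assoc]
        have := (hBp x hx).le
        have h3 : f x / N ≤ a / N := by gcongr
        rw [hb]
        gcongr
      have h2 := gconv_upper hσ hH hH0 hHK hBp hBa hBm (by positivity) hδp h1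
      have h3 : ∀ᶠ x in atTop, U x ≤ ((L + δ) * b + δ) * B x := by
        filter_upwards [h2, hUev] with x h3 h4
        rwa [h4]
      have h4 := gconv_upper hσ hUa hU0 hUK hBp hBa hBm (by positivity) hδp h3
      filter_upwards [h4, eventually_gt_atTop 0] with x h5 hx
      simp only [hf]
      rw [div_le_iff₀ (hBp x hx)]
      refine h5.trans (mul_le_mul_of_nonneg_right ?_ (hBp x hx).le)
      have : δ * (a + 3) = ε := by rw [hδ]; field_simp
      have : δ * b ≤ δ * (a + 1) := mul_le_mul_of_nonneg_left (by linarith) hδp.le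
      linarith
    · intro a ha hfa ε hε
      set δ := ε / (|a| + 3) with hδ
      have hδp : 0 < δ := by positivity
      have haN : |a| / N ≤ |a| := div_le_self (abs_nonneg a) (by linarith)
      have haN1 : a / N ≤ |a| / N := by gcongr; exact le_abs_self a
      set b := a / N + (N - 1) / N with hb
      have h1 : ∀ᶠ x in atTop, ((L - δ) * b) * B x ≤ H x := by
        rcases le_or_gt 0 (L - δ) with hs | hs
        · filter_upwards [hfa, hHG δ hδp, eventually_gt_atTop 0] with x h1 h2 hx
          refine le_trans ?_ h2.1
          rw [hGf x hx, mul_assoc]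
          have := (hBp x hx).le
          have h3 : a / N ≤ f x / N := by gcongr
          rw [hb]
          gcongr
        · have hb0 : 0 ≤ b := by
            rw [hb, ← add_div]
            exact div_nonneg (by linarith) hN0.le
          filter_upwards [eventually_gt_atTop 0] with x hx
          refine le_trans ?_ (hH0 x)
          have := (hBp x hx).le
          exact mul_nonpos_of_nonpos_of_nonneg
            (mul_nonpos_of_nonpos_of_nonneg hs.le hb0) this
      have h2 := gconv_lower_any hσ hH hH0 hHK hBp hBa hBm hδp h1
      have h3 : ∀ᶠ x in atTop, ((L - δ) * b - δ) * B x ≤ U x := by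
        filter_upwards [h2, hUev] with x h3 h4
        rwa [h4]
      have h4 := gconv_lower_any hσ hUa hU0 hUK hBp hBa hBm hδp h3
      filter_upwards [h4, eventually_gt_atTop 0] with x h5 hx
      simp only [hf]
      rw [le_div_iff₀ (hBp x hx)]
      refine le_trans (mul_le_mul_of_nonneg_right ?_ (hBp x hx).le) h5
      have : δ * (|a| + 3) = ε := by rw [hδ]; field_simp
      have : δ * b ≤ δ * (|a| + 1) := mul_le_mul_of_nonneg_left (by linarith) hδp.le
      linarith
  have hAreg := regvar_of_deriv (c := c) hAp (fun x _ => hAd x) hflim hx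
  set g : ℝ → ℝ := fun x => f x / N + (N - 1) / N with hg
  have hglim : Tendsto g atTop (nhds (c / N + (N - 1) / N)) :=
    (hflim.div_const N).add_const _
  have hgne : c / N + (N - 1) / N ≠ 0 := by
    have : 0 ≤ c := div_nonneg (mul_nonneg hL0 hNN) (by linarith)
    have h1 : 0 < (N - 1) / N := div_pos (by linarith) hN0
    positivity
  have hscale : Tendsto (fun α : ℝ => α * x) atTop atTop := tendsto_id.atTop_mul_const hx
  have hq := ((hglim.comp hscale).div hglim hgne).mul (hAreg.mul_const x⁻¹)
  rw [div_self hgne, one_mul, ← Real.rpow_neg_one x, ← Real.rpow_add hx] at hq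
  have hexp : c + -1 = (L - 1) / (1 - L / N) := by
    have : N - L ≠ 0 := by linarith
    rw [hc]; field_simp; ring
  rw [hexp] at hq
  refine hq.congr' ?_
  filter_upwards [eventually_gt_atTop 0] with α hα
  have h1 := hGf α hα
  have h2 := hGf (α * x) (by positivity)
  have hgp : g α ≠ 0 := by
    intro h
    have := hGpos α
    rw [h1] at this
    simp only [hg] at h
    rw [h] at this
    simp at this
  rw [h1, h2]
  simp only [Function.comp, Pi.div_apply, hB]
  change g (α * x) / g α * (A (α * x) / A α * x ^ (-1:ℝ)) = g (α * x) * (A (α * x) / (α * x)) / (g α * (A α / α))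
  rw [Real.rpow_neg_one]
  have := (hAp α hα).ne'
  field_simp

/-! ## The conditional expectation function `Ψ⁺` -/

section psi

variable {Ω : Type*} [MeasurableSpace Ω] {P : Measure Ω} [IsProbabilityMeasure P]
  {V : Ω → ℝ} {m M : ℝ}

lemma meas_gt (hVm : Measurable V) (y : ℝ) : MeasurableSet {ω | V ω > y} :=
  measurableSet_lt measurable_const hVm

lemma phip_sub (hVm : Measurable V) (hV : Integrable V P) {y y' : ℝ} (h : y ≤ y') :
    y * (Pip P V y - Pip P V y') ≤ Phip P V y - Phip P V y' ∧
    Phip P V y - Phip P V y' ≤ y' * (Pip P V y - Pip P V y') := by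
  set S := {ω | V ω > y} \ {ω | V ω > y'} with hS
  have hsub : {ω | V ω > y'} ⊆ {ω | V ω > y} := fun ω hω => lt_of_le_of_lt h hω
  have hSm : MeasurableSet S := (meas_gt hVm y).diff (meas_gt hVm y')
  have h1 : Phip P V y - Phip P V y' = ∫ ω in S, V ω ∂P := by
    rw [hS, setIntegral_sdiff (meas_gt hVm y') hV.integrableOn hsub]
    rfl
  have h2 : Pip P V y - Pip P V y' = P.real S := by
    rw [hS, measureReal_sdiff hsub (meas_gt hVm y')]
    rfl
  have hc : ∀ c : ℝ, ∫ ω in S, c ∂P = c * P.real S := by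
    intro c; rw [setIntegral_const, smul_eq_mul, mul_comm]
  rw [h1, h2, ← hc, ← hc]
  constructor
  · exact setIntegral_mono_on (by simp) hV.integrableOn hSm fun ω hω => le_of_lt hω.1
  · exact setIntegral_mono_on hV.integrableOn (by simp) hSm fun ω hω => not_lt.mp hω.2

lemma pip_anti {y y' : ℝ} (h : y ≤ y') : Pip P V y' ≤ Pip P V y :=
  measureReal_mono (μ := P) (fun ω hω => lt_of_le_of_lt h hω)

lemma pip_pos (hs : SuppIoo P V m M) {y : ℝ} (hy : y < M) : 0 < Pip P V y :=
  ENNReal.toReal_pos (hs.2.2.1 y hy).ne' (measure_ne_top _ _)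

lemma psip_ge (hVm : Measurable V) (hV : Integrable V P) (hs : SuppIoo P V m M) {y : ℝ}
    (hy : y < M) : y ≤ Psip P V y := by
  unfold Psip
  rw [le_div_iff₀ (pip_pos hs hy)]
  have : ∫ ω in {ω | V ω > y}, y ∂P = y * Pip P V y := by
    rw [setIntegral_const, smul_eq_mul, mul_comm]; rfl
  rw [← this]
  exact setIntegral_mono_on (by simp) hV.integrableOn (meas_gt hVm y) fun ω hω => le_of_lt hω

lemma psip_le (hV : Integrable V P) (hs : SuppIoo P V m M) {y : ℝ}
    (hy : y < M) : Psip P V y ≤ M := by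
  unfold Psip
  rw [div_le_iff₀ (pip_pos hs hy)]
  have : ∫ ω in {ω | V ω > y}, M ∂P = M * Pip P V y := by
    rw [setIntegral_const, smul_eq_mul, mul_comm]; rfl
  rw [← this]
  refine setIntegral_mono_ae hV.integrableOn (by simp) ?_
  filter_upwards [hs.2.1] with ω hω using hω.2

lemma psip_mono (hVm : Measurable V) (hV : Integrable V P) (hs : SuppIoo P V m M) {y y' : ℝ}
    (h : y ≤ y') (hy' : y' < M) : Psip P V y ≤ Psip P V y' := by
  have hp := pip_pos hs (lt_of_le_of_lt h hy')
  have hp' := pip_pos hs hy'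
  have h1 := (phip_sub hVm hV h).2
  have h2 := psip_ge hVm hV hs hy'
  have h3 := pip_anti (P := P) (V := V) h
  unfold Psip at *
  rw [le_div_iff₀ hp'] at h2
  rw [div_le_div_iff₀ hp hp']
  have h4 : (Pip P V y - Pip P V y') * (y' * Pip P V y')
    ≤ (Pip P V y - Pip P V y') * Phip P V y' := mul_le_mul_of_nonneg_left h2 (by linarith)
  have h5 := mul_le_mul_of_nonneg_right h1 hp'.le
  nlinarith

lemma psip_ge_mean (hVm : Measurable V) (hV : Integrable V P) (hs : SuppIoo P V m M) {y : ℝ}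
    (hy : y < M) : ∫ ω, V ω ∂P ≤ Psip P V y := by
  have hp := pip_pos hs hy
  have h2 := psip_ge hVm hV hs hy
  have e : ∫ ω, V ω ∂P = Phip P V y + ∫ ω in {ω | V ω > y}ᶜ, V ω ∂P :=
    (integral_add_compl (meas_gt hVm y) hV).symm
  have h3 : ∫ ω in {ω | V ω > y}ᶜ, V ω ∂P ≤ y * (1 - Pip P V y) := by
    have : ∫ ω in {ω | V ω > y}ᶜ, y ∂P = y * (1 - Pip P V y) := by
      rw [setIntegral_const, smul_eq_mul, mul_comm, probReal_compl_eq_one_sub (meas_gt hVm y)]; rfl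
    rw [← this]
    exact setIntegral_mono_on hV.integrableOn (by simp) (meas_gt hVm y).compl
      fun ω hω => not_lt.mp hω
  have hp1 : Pip P V y ≤ 1 := measureReal_le_one (μ := P)
  have h4 : Phip P V y = Psip P V y * Pip P V y := by
    unfold Psip; field_simp
  have h5 : y * (1 - Pip P V y) ≤ Psip P V y * (1 - Pip P V y) :=
    mul_le_mul_of_nonneg_right h2 (by linarith)
  rw [e, h4]
  linarith

lemma phip_diff (hVm : Measurable V) (hV : Integrable V P) {y : ℝ}
    (hd : DifferentiableAt ℝ (Pip P V) y) : DifferentiableAt ℝ (Phip P V) y := by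
  have key : ∀ y', |Phip P V y' - Phip P V y - y * (Pip P V y' - Pip P V y)|
      ≤ |y' - y| * |Pip P V y' - Pip P V y| := by
    intro y'
    rcases le_total y y' with h | h
    · obtain ⟨h1, h2⟩ := phip_sub hVm hV h
      have h3 := pip_anti (P := P) (V := V) h
      rw [abs_of_nonneg (sub_nonneg.mpr h), abs_of_nonpos (sub_nonpos.mpr h3), abs_le]
      constructor <;> nlinarith
    · obtain ⟨h1, h2⟩ := phip_sub hVm hV h
      have h3 := pip_anti (P := P) (V := V) h
      rw [abs_of_nonpos (sub_nonpos.mpr h), abs_of_nonneg (sub_nonneg.mpr h3), abs_le]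
      constructor <;> nlinarith
  have hrem : HasDerivAt (fun y' => Phip P V y' - y * Pip P V y') 0 y := by
    rw [hasDerivAt_iff_isLittleO]
    simp only [smul_zero, sub_zero]
    have h1 : (fun y' => (y' - y) * (Pip P V y' - Pip P V y)) =o[nhds y] fun y' => (y' - y) * 1 := by
      refine (Asymptotics.isBigO_refl _ _).mul_isLittleO ?_
      rw [Asymptotics.isLittleO_one_iff]
      have := hd.continuousAt.tendsto.sub_const (Pip P V y)
      simpa using this
    simp only [mul_one] at h1
    refine (Asymptotics.isBigO_of_le _ fun y' => ?_).trans_isLittleO h1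
    rw [norm_mul, Real.norm_eq_abs, Real.norm_eq_abs, Real.norm_eq_abs]
    refine le_trans (le_of_eq ?_) (key y')
    congr 1; ring
  have := hrem.differentiableAt.add (hd.const_mul y)
  refine this.congr_of_eventuallyEq (Eventually.of_forall fun y' => ?_)
  simp

lemma psip_ratio (hVm : Measurable V) (hV : Integrable V P) (hs : SuppIoo P V m M)
    (hC1 : ContDiffOn ℝ 1 (Pip P V) (Set.Ioo m M))
    {L : ℝ} (hL : Tendsto (deriv (Psip P V)) (nhdsWithin M (Set.Iio M)) (nhds L)) :
    Tendsto (fun r => (M - Psip P V r) / (M - r)) (nhdsWithin M (Set.Iio M)) (nhds L) := by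
  have hIoo : Set.Ioo m M ∈ nhdsWithin M (Set.Iio M) := Ioo_mem_nhdsLT hs.1
  have hd : ∀ y ∈ Set.Ioo m M, DifferentiableAt ℝ (Psip P V) y := by
    intro y hy
    have h1 : DifferentiableAt ℝ (Pip P V) y :=
      (hC1.differentiableOn one_ne_zero).differentiableAt (isOpen_Ioo.mem_nhds hy)
    exact (phip_diff hVm hV h1).div h1 (pip_pos hs hy.2).ne'
  have hid : Tendsto (fun r : ℝ => r) (nhdsWithin M (Set.Iio M)) (nhds M) :=
    tendsto_id.mono_left nhdsWithin_le_nhds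
  have hPsi : Tendsto (Psip P V) (nhdsWithin M (Set.Iio M)) (nhds M) := by
    refine tendsto_of_tendsto_of_tendsto_of_le_of_le' hid tendsto_const_nhds ?_ ?_
    · filter_upwards [self_mem_nhdsWithin] with r hr using psip_ge hVm hV hs hr
    · filter_upwards [self_mem_nhdsWithin] with r hr using psip_le hV hs hr
  have hdg : ∀ r : ℝ, deriv (fun r : ℝ => M - r) r = -1 := by
    intro r
    simp
  refine deriv.lhopital_zero_nhdsLT (f := fun r => M - Psip P V r) (g := fun r => M - r) ?_ ?_ ?_ ?_ ?_
  · filter_upwards [hIoo] with r hr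
    exact (hd r hr).const_sub M
  · refine Eventually.of_forall fun r => ?_
    rw [hdg]; norm_num
  · simpa using hPsi.const_sub M
  · simpa using hid.const_sub M
  · refine hL.congr fun r => ?_
    rw [hdg, deriv_const_sub]
    simp

end psi

/-! ## Rewriting the equation -/

lemma prod_integrable {σ : ℝ} (hσ : 0 < σ) {F : ℝ → ℝ} (hF : Antitone F) {K : ℝ}
    (h0 : ∀ x, 0 ≤ F x) (hK : ∀ x, F x ≤ K) (x : ℝ) :
    Integrable (Function.uncurry fun y z => F z * gq σ (y - z))
      ((volume.restrict (Set.Ioc 0 x)).prod volume) := by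
  rw [integrable_prod_iff]
  · constructor
    · exact Eventually.of_forall fun y => gconv_integrable' hσ hF h0 hK y
    · have : (fun y => ∫ z, ‖Function.uncurry (fun y z => F z * gq σ (y - z)) (y, z)‖)
          = gconv σ F := by
        funext y
        rw [← gconv_eq]
        refine integral_congr_ae (Eventually.of_forall fun z => ?_)
        simp only [Function.uncurry]
        exact Real.norm_of_nonneg (mul_nonneg (h0 _) (gq_pos hσ _).le)
      rw [this]
      exact (gconv_continuous hσ hF h0 hK).integrableOn_Ioc
  · refine Measurable.aestronglyMeasurable ?_
    exact (hF.measurable.comp measurable_snd).mul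
      ((gq_cont σ).measurable.comp (measurable_fst.sub measurable_snd))

lemma gqbar_int {σ : ℝ} (hσ : 0 < σ) {F : ℝ → ℝ} (hF : Antitone F) {K : ℝ}
    (h0 : ∀ x, 0 ≤ F x) (hK : ∀ x, F x ≤ K) {x : ℝ} (hx : 0 < x) :
    Integrable (fun z => F z * gqbar σ x z) ∧
    ∫ z, F z * gqbar σ x z = (1 / x) * ∫ y in (0:ℝ)..x, gconv σ F y := by
  have hp := prod_integrable hσ hF h0 hK x
  have e : (fun z => F z * gqbar σ x z)
      = fun z => (1 / x) * ∫ y in Set.Ioc 0 x, F z * gq σ (y - z) := by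
    funext z
    simp only [gqbar, if_neg hx.ne']
    rw [intervalIntegral.integral_of_le hx.le, integral_const_mul]
    ring
  rw [e]
  constructor
  · exact hp.integral_prod_right.const_mul (1 / x)
  · rw [integral_const_mul, intervalIntegral.integral_of_le hx.le]
    congr 1
    rw [← integral_integral_swap hp]
    simp_rw [gconv_eq]

lemma kernel_int {σ : ℝ} (hσ : 0 < σ) {F : ℝ → ℝ} (hF : Antitone F) {K : ℝ}
    (h0 : ∀ x, 0 ≤ F x) (hK : ∀ x, F x ≤ K) {x : ℝ} (hx : 0 < x) (a b : ℝ) :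
    Integrable (fun z => (a * gq σ (x - z) + b * gqbar σ x z) * F z) ∧
    ∫ z, (a * gq σ (x - z) + b * gqbar σ x z) * F z
      = a * gconv σ F x + b * ((1 / x) * ∫ y in (0:ℝ)..x, gconv σ F y) := by
  obtain ⟨h1, h2⟩ := gqbar_int hσ hF h0 hK hx
  have h3 := gconv_integrable' hσ hF h0 hK x
  have e : (fun z => (a * gq σ (x - z) + b * gqbar σ x z) * F z)
      = fun z => a * (F z * gq σ (x - z)) + b * (F z * gqbar σ x z) := by
    funext z; ring
  rw [e]
  refine ⟨(h3.const_mul a).add (h1.const_mul b), ?_⟩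
  rw [integral_add (h3.const_mul a) (h1.const_mul b), integral_const_mul, integral_const_mul,
    gconv_eq, h2]

lemma eq_rewrite {Ω : Type*} [MeasurableSpace Ω] {P : Measure Ω} {V : Ω → ℝ}
    {σ : ℝ} (hσ : 0 < σ) {N : ℕ} (hN : 2 ≤ N) {R H U : ℝ → ℝ} {M : ℝ}
    (hsol : SolvesCp P V σ N R) (hHR : ∀ y, H y = M - Psip P V (R y))
    (hH : Antitone H) (hH0 : ∀ x, 0 ≤ H x) (hHK : ∀ x, H x ≤ M - ∫ ω, V ω ∂P)
    (hU : U = fun z => if 0 < z then gconv σ H z else M - ∫ ω, V ω ∂P)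
    {x : ℝ} (hx : 0 < x) :
    M - R x = (1 / (N:ℝ)) * gconv σ U x
      + (((N:ℝ) - 1) / N) * ((1 / x) * ∫ y in (0:ℝ)..x, gconv σ U y) := by
  set E := ∫ ω, V ω ∂P with hE
  have hN0 : (0:ℝ) < N := by positivity
  have hK : 0 ≤ M - E := (hH0 0).trans (hHK 0)
  have hUa : Antitone U := by
    intro a b hab
    rw [hU]
    simp only
    split_ifs with h1 h2 h2
    · exact gconv_antitone hσ hH hH0 hHK hab
    · exact gconv_le hσ hH hH0 hHK b
    · linarith
    · exact le_refl _
  have hU0 : ∀ z, 0 ≤ U z := by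
    intro z; rw [hU]; simp only
    split_ifs
    · exact gconv_nonneg hσ hH0 z
    · exact hK
  have hUK : ∀ z, U z ≤ M - E := by
    intro z; rw [hU]; simp only
    split_ifs
    · exact gconv_le hσ hH hH0 hHK z
    · exact le_refl _
  have hinner : ∀ z, ∫ y, Psip P V (R y) * gq σ (z - y) = M - gconv σ H z := by
    intro z
    have e : (fun y => Psip P V (R y) * gq σ (z - y))
        = fun y => M * gq σ (z - y) - H y * gq σ (z - y) := by
      funext y; rw [hHR]; ring
    have hi := (gq_integrable hσ).comp_sub_left z
    rw [e, integral_sub (hi.const_mul M) (gconv_integrable' hσ hH hH0 hHK z), gconv_eq σ H,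
      integral_const_mul, integral_sub_left_eq_self (gq σ) volume z, gq_integral hσ, mul_one]
  set κ : ℝ → ℝ := fun z => (1 / (N:ℝ)) * gq σ (x - z) + (((N:ℝ) - 1) / N) * gqbar σ x z with hκ
  obtain ⟨hi1, he1⟩ := kernel_int hσ hUa hU0 hUK hx (1 / (N:ℝ)) (((N:ℝ) - 1) / N)
  obtain ⟨hi2, he2⟩ := kernel_int (F := fun _ => (1:ℝ)) hσ antitone_const (K := 1)
    (fun _ => zero_le_one) (fun _ => le_refl _) hx (1 / (N:ℝ)) (((N:ℝ) - 1) / N)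
  have hg1 : ∀ y, gconv σ (fun _ => (1:ℝ)) y = 1 := by
    intro y; simp only [gconv, one_mul]; exact gq_integral hσ
  have hone : (1 / (N:ℝ)) * 1 + (((N:ℝ) - 1) / N) * ((1 / x) * ∫ y in (0:ℝ)..x, (1:ℝ)) = 1 := by
    rw [intervalIntegral.integral_const, smul_eq_mul]
    field_simp
    ring
  simp only [hg1] at he2
  rw [hone] at he2
  simp only [mul_one] at hi2 he2
  have hkey := hsol x
  simp only [hinner] at hkey
  have hi : Integrable (fun z => M * κ z - κ z * U z) := (hi2.const_mul M).sub hi1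
  have hA : ∫ z in Set.Ioi (0:ℝ), κ z * (M - gconv σ H z)
      = ∫ z in Set.Ioi (0:ℝ), (M * κ z - κ z * U z) := by
    refine setIntegral_congr_fun measurableSet_Ioi fun z hz => ?_
    have : U z = gconv σ H z := by rw [hU]; simp [mem_Ioi.mp hz]
    simp only [this]
    ring
  have hB : E * ∫ z in Set.Iio (0:ℝ), κ z = ∫ z in Set.Iic (0:ℝ), (M * κ z - κ z * U z) := by
    rw [← integral_Iic_eq_integral_Iio, ← integral_const_mul]
    refine setIntegral_congr_fun measurableSet_Iic fun z hz => ?_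
    have : U z = M - E := by rw [hU]; simp [not_lt.mpr (mem_Iic.mp hz)]
    simp only [this]
    ring
  have hsum := intervalIntegral.integral_Iic_add_Ioi (b := (0:ℝ)) hi.integrableOn hi.integrableOn
  have htot : ∫ z, (M * κ z - κ z * U z) = M - ∫ z, κ z * U z := by
    rw [integral_sub (hi2.const_mul M) hi1, integral_const_mul, he2, mul_one]
  have hR : R x = M - ∫ z, κ z * U z := by
    rw [← htot, ← hsum, ← hA, ← hB, add_comm]
    exact hkey
  rw [hR, he1]
  ring

/-- If `N ≥ 2`, `Π⁺` is `C¹` on `(m,M)` and `Ψ⁺ₓ(M) = lim_{x→M⁻} (Ψ⁺)'(x)` exists,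
then for any nondecreasing solution `R` of (C⁺) with `R < M` and `R → M` at `∞`, the function
`G = M − R` is regularly varying at `∞` of index `ρ⁺ = (Ψ⁺ₓ(M) − 1)/(1 − Ψ⁺ₓ(M)/N)`. -/
theorem stmt15 {Ω : Type*} [MeasurableSpace Ω] (P : Measure Ω) [IsProbabilityMeasure P]
    (V : Ω → ℝ) (hVmeas : Measurable V) (hV : Integrable V P)
    (m M : ℝ) (hsupp : SuppIoo P V m M)
    (σ : ℝ) (hσ : 0 < σ) (N : ℕ) (hN : 2 ≤ N)
    (hC1 : ContDiffOn ℝ 1 (Pip P V) (Set.Ioo m M))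
    (L : ℝ) (hL : Tendsto (deriv (Psip P V)) (nhdsWithin M (Set.Iio M)) (nhds L))
    (R : ℝ → ℝ) (hRm : Monotone R) (hRr : ∀ x, R x ∈ Set.Icc m M)
    (hRlt : ∀ x, R x < M) (hRtop : Tendsto R atTop (nhds M))
    (hRsol : SolvesCp P V σ N R) :
    ∀ x : ℝ, 0 < x →
      Tendsto (fun α : ℝ => (M - R (α * x)) / (M - R α)) atTop
        (nhds (x ^ ((L - 1) / (1 - L / (N:ℝ))))) := by
  intro x hx
  have hev : Tendsto R atTop (nhdsWithin M (Set.Iio M)) :=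
    tendsto_nhdsWithin_iff.mpr ⟨hRtop, Eventually.of_forall hRlt⟩
  have hratio := psip_ratio hVmeas hV hsupp hC1 hL
  have hL0 : 0 ≤ L := by
    refine ge_of_tendsto hratio ?_
    filter_upwards [self_mem_nhdsWithin] with r hr
    exact div_nonneg (sub_nonneg.mpr (psip_le hV hsupp hr)) (sub_nonneg.mpr (le_of_lt hr))
  have hL1 : L ≤ 1 := by
    refine le_of_tendsto hratio ?_
    filter_upwards [self_mem_nhdsWithin] with r hr
    rw [div_le_one (sub_pos.mpr hr)]
    linarith [psip_ge hVmeas hV hsupp hr]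
  have hH : Antitone (fun y => M - Psip P V (R y)) := by
    intro a b hab
    have := psip_mono hVmeas hV hsupp (hRm hab) (hRlt b)
    simp only
    linarith
  have hH0 : ∀ y, 0 ≤ M - Psip P V (R y) := fun y => sub_nonneg.mpr (psip_le hV hsupp (hRlt y))
  have hHK : ∀ y, M - Psip P V (R y) ≤ M - ∫ ω, V ω ∂P := fun y => by
    linarith [psip_ge_mean hVmeas hV hsupp (hRlt y)]
  refine core (G := fun x => M - R x) (H := fun y => M - Psip P V (R y))
    (U := fun z => if 0 < z then gconv σ (fun y => M - Psip P V (R y)) z else M - ∫ ω, V ω ∂P)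
    (K := M - ∫ ω, V ω ∂P) hσ (by exact_mod_cast hN) hL0 hL1 hH hH0 hHK rfl
    (fun y => sub_pos.mpr (hRlt y)) ?_ ?_ hx
  · intro y hy
    exact eq_rewrite hσ hN hRsol (fun _ => rfl) hH hH0 hHK rfl hy
  · intro ε hε
    have h1 := (Metric.tendsto_nhds.mp (hratio.comp hev)) ε hε
    filter_upwards [h1] with y hy
    have hp : 0 < M - R y := sub_pos.mpr (hRlt y)
    rw [Real.dist_eq, abs_lt] at hy
    simp only [Function.comp] at hy
    constructor
    · rw [← le_div_iff₀ hp]; linarith [hy.1]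
    · rw [← div_le_iff₀ hp]; linarith [hy.2]
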